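/- arXiv:2403.18399 — 2 statements merged into one kernel-verified Lean document; each statement's English description precedes it below -/
import Mathlib

section
/- Let r ≥ 1. For every j ∈ {0,…,r}, the element t_{jj} lies in the center of ft'(r); that is, [t_{jj}, x] = 0 for all x ∈ ft'(r). -/
open FreeLieAlgebra

/-- The defining relations of the cyclically presented framed Drinfeld–Kohno Lie algebra
`ft'(r)`.  Generators are indexed by `Fin (r+1) × Fin (r+1)`, the index `i : Fin (r+1)`
representing `i ∈ {0,…,r}`. -/
def ftcRel (r : ℕ) : Set (FreeLieAlgebra ℚ (Fin (r + 1) × Fin (r + 1))) :=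
  { x | (∃ i j : Fin (r + 1), x = of ℚ (i, j) - of ℚ (j, i)) ∨
        (∃ i j k l : Fin (r + 1), ({i, j} ∩ {k, l} : Set (Fin (r + 1))) = ∅ ∧
          x = ⁅of ℚ (i, j), of ℚ (k, l)⁆) ∨
        (∃ j : Fin (r + 1), x = ∑ i : Fin (r + 1), of ℚ (i, j)) }

/-- The cyclically presented framed Drinfeld–Kohno Lie algebra `ft'(r)`: the quotient of the
free Lie algebra over `ℚ` on the generators `t_{ij}`, `0 ≤ i,j ≤ r`, by the Lie ideal generated
by the relations. -/
abbrev ftc (r : ℕ) :=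
  FreeLieAlgebra ℚ (Fin (r + 1) × Fin (r + 1)) ⧸
    LieSubmodule.lieSpan ℚ (FreeLieAlgebra ℚ (Fin (r + 1) × Fin (r + 1))) (ftcRel r)

/-- The image `t_{ij}` in `ft'(r)` of the generator indexed by `(i,j)`. -/
noncomputable def tc {r : ℕ} (i j : Fin (r + 1)) : ftc r :=
  LieSubmodule.Quotient.mk
    (N := LieSubmodule.lieSpan ℚ (FreeLieAlgebra ℚ (Fin (r + 1) × Fin (r + 1))) (ftcRel r))
    (of ℚ (i, j))

/-!
It suffices that `t_{jj}` commutes with the generators `t_{kl}`, since `ad t_{jj}` is a derivation.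
If `k, l ≠ j` this is a defining relation. For `l ≠ j`, bracketing `t_{jj}` with the relation
`∑ i, t_{il} = 0` therefore kills every term except `[t_{jj}, t_{jl}]`, which must vanish too; the
generators `t_{lj}` are covered by symmetry.
-/

section Generation

variable {R L X : Type*} [CommRing R] [LieRing L] [LieAlgebra R L]

theorem lie_eq_zero_of_lieSpan_eq_top {s : Set L} (hs : LieSubalgebra.lieSpan R L s = ⊤) {a : L}
    (ha : ∀ y ∈ s, ⁅a, y⁆ = 0) (x : L) : ⁅a, x⁆ = 0 := by
  have ad_eq_zero : LieDerivation.ad R L a = 0 :=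
    LieDerivation.ext_of_lieSpan_eq_top s hs fun y hy ↦ by simpa using ha y hy
  simpa using LieDerivation.congr_fun ad_eq_zero x

theorem lieSpan_range_of_eq_top :
    LieSubalgebra.lieSpan R (FreeLieAlgebra R X) (Set.range (of R)) = ⊤ := by
  set S := LieSubalgebra.lieSpan R (FreeLieAlgebra R X) (Set.range (of R))
  let retraction : FreeLieAlgebra R X →ₗ⁅R⁆ S :=
    lift R fun x ↦ ⟨of R x, LieSubalgebra.subset_lieSpan (Set.mem_range_self x)⟩
  have incl_comp_retraction : S.incl.comp retraction = LieHom.id :=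
    hom_ext fun x ↦ by simp [retraction]
  refine eq_top_iff.2 fun y _ ↦ ?_
  have incl_retraction_apply : (retraction y : FreeLieAlgebra R X) = y :=
    LieHom.congr_fun incl_comp_retraction y
  exact incl_retraction_apply ▸ (retraction y).2

/-- The projection `L → L ⧸ I` as a morphism of Lie algebras; `LieSubmodule.Quotient.mk'` is only
a morphism of Lie modules over `L`. -/
def lieQuotientMk (I : LieIdeal R L) : L →ₗ⁅R⁆ L ⧸ I :=
  { (LieSubmodule.Quotient.mk' I : L →ₗ[R] L ⧸ I) with
    map_lie' := fun {x y} ↦ LieSubmodule.Quotient.mk_bracket I x y }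

theorem lieQuotientMk_surjective (I : LieIdeal R L) : Function.Surjective (lieQuotientMk I) :=
  LieSubmodule.Quotient.surjective_mk' I

theorem lieSpan_image_eq_top {L' : Type*} [LieRing L'] [LieAlgebra R L'] {f : L →ₗ⁅R⁆ L'}
    (hf : Function.Surjective f) {s : Set L} (hs : LieSubalgebra.lieSpan R L s = ⊤) :
    LieSubalgebra.lieSpan R L' (f '' s) = ⊤ := by
  rw [← LieSubalgebra.map_lieSpan, hs, ← LieHom.range_eq_map, LieHom.range_eq_top]
  exact hf

end Generation

section Diagonal

variable {ι L : Type*} [Fintype ι] [LieRing L] {t : ι → ι → L}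

theorem lie_diag_row_eq_zero (hcomm : ∀ i j k, j ≠ i → k ≠ i → ⁅t i i, t j k⁆ = 0)
    (hsum : ∀ j, ∑ i, t i j = 0) {j l : ι} (hl : l ≠ j) : ⁅t j j, t j l⁆ = 0 :=
  calc
    ⁅t j j, t j l⁆ = ∑ i, ⁅t j j, t i l⁆ :=
      (Fintype.sum_eq_single j fun i hi ↦ hcomm j i l hi hl).symm
    _ = ⁅t j j, ∑ i, t i l⁆ := (lie_sum ..).symm
    _ = 0 := by rw [hsum, lie_zero]

theorem lie_diag_eq_zero (hsymm : ∀ i j, t i j = t j i)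
    (hcomm : ∀ i j k, j ≠ i → k ≠ i → ⁅t i i, t j k⁆ = 0)
    (hsum : ∀ j, ∑ i, t i j = 0) (j k l : ι) : ⁅t j j, t k l⁆ = 0 := by
  rcases eq_or_ne k j with rfl | hk
  · rcases eq_or_ne l k with rfl | hl
    · exact lie_self _
    · exact lie_diag_row_eq_zero hcomm hsum hl
  · rcases eq_or_ne l j with rfl | hl
    · rw [hsymm k l]
      exact lie_diag_row_eq_zero hcomm hsum hk
    · exact hcomm j k l hk hl

end Diagonal

section Relations

variable {r : ℕ}

theorem lieQuotientMk_of_eq_tc (i j : Fin (r + 1)) :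
    lieQuotientMk (LieSubmodule.lieSpan ℚ _ (ftcRel r)) (of ℚ (i, j)) = tc i j :=
  rfl

theorem lieQuotientMk_eq_zero_of_mem_ftcRel {x : FreeLieAlgebra ℚ (Fin (r + 1) × Fin (r + 1))}
    (hx : x ∈ ftcRel r) : lieQuotientMk (LieSubmodule.lieSpan ℚ _ (ftcRel r)) x = 0 :=
  LieSubmodule.Quotient.mk_eq_zero'.2 (LieSubmodule.subset_lieSpan hx)

theorem tc_comm (i j : Fin (r + 1)) : tc i j = tc j i := by
  have mk_relation := lieQuotientMk_eq_zero_of_mem_ftcRel (r := r) (.inl ⟨i, j, rfl⟩)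
  rwa [map_sub, lieQuotientMk_of_eq_tc, lieQuotientMk_of_eq_tc, sub_eq_zero] at mk_relation

theorem lie_tc_eq_zero_of_disjoint {i j k l : Fin (r + 1)}
    (h : Disjoint ({i, j} : Set (Fin (r + 1))) {k, l}) : ⁅tc i j, tc k l⁆ = 0 := by
  have mk_relation := lieQuotientMk_eq_zero_of_mem_ftcRel (r := r)
    (.inr (.inl ⟨i, j, k, l, h.inter_eq, rfl⟩))
  rwa [LieHom.map_lie, lieQuotientMk_of_eq_tc, lieQuotientMk_of_eq_tc] at mk_relation

theorem sum_tc_eq_zero (j : Fin (r + 1)) : ∑ i, tc i j = 0 := by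
  have mk_relation := lieQuotientMk_eq_zero_of_mem_ftcRel (r := r) (.inr (.inr ⟨j, rfl⟩))
  simpa only [map_sum, lieQuotientMk_of_eq_tc] using mk_relation

theorem lieSpan_range_tc_eq_top (r : ℕ) :
    LieSubalgebra.lieSpan ℚ (ftc r) (Set.range fun p : Fin (r + 1) × Fin (r + 1) ↦ tc p.1 p.2) =
      ⊤ := by
  have span_image_eq_top := lieSpan_image_eq_top
    (lieQuotientMk_surjective (LieSubmodule.lieSpan ℚ _ (ftcRel r))) lieSpan_range_of_eq_top
  rwa [← Set.range_comp] at span_image_eq_top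

theorem lie_tc_diag_eq_zero (j k l : Fin (r + 1)) : ⁅tc j j, tc k l⁆ = 0 :=
  lie_diag_eq_zero tc_comm
    (fun i j k hj hk ↦ lie_tc_eq_zero_of_disjoint (by simp [hj.symm, hk.symm]))
    sum_tc_eq_zero j k l

end Relations

/-- For `r ≥ 1` and every `j ∈ {0,…,r}`, the element `t_{jj}` is central in
`ft'(r)`: `[t_{jj}, x] = 0` for all `x ∈ ft'(r)`. -/
theorem tc_diag_central (r : ℕ) (hr : 1 ≤ r) (j : Fin (r + 1)) (x : ftc r) :
    ⁅tc j j, x⁆ = 0 := by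
  apply lie_eq_zero_of_lieSpan_eq_top (lieSpan_range_tc_eq_top r)
  rintro _ ⟨⟨k, l⟩, rfl⟩
  exact lie_tc_diag_eq_zero j k l
end

section
/- Let r ≥ 1 and let τ : ft(r) → ft(r) be the unique Lie algebra homomorphism with τ(t_{ij}) = t_{ij} for all 2 ≤ i,j ≤ r, τ(t_{1i}) = τ(t_{i1}) = −∑_{k=1}^r t_{ki} for all 2 ≤ i ≤ r, and τ(t_{11}) = ∑_{k,l=1}^r t_{kl}. Then τ ∘ τ is the identity of ft(r); in particular τ is a Lie algebra automorphism of ft(r) of order at most two. -/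
open FreeLieAlgebra

/-- The defining relations of the framed Drinfeld–Kohno Lie algebra `ft(r)`.  Generators are
indexed by `Fin r × Fin r`, the index `i : Fin r` representing `i+1 ∈ {1,…,r}`. -/
def ftRel (r : ℕ) : Set (FreeLieAlgebra ℚ (Fin r × Fin r)) :=
  { x | (∃ i j : Fin r, x = of ℚ (i, j) - of ℚ (j, i)) ∨
        (∃ i j k l : Fin r, ({i, j} ∩ {k, l} : Set (Fin r)) = ∅ ∧
          x = ⁅of ℚ (i, j), of ℚ (k, l)⁆) ∨
        (∃ i j k : Fin r, x = ⁅of ℚ (i, j), of ℚ (k, i) + of ℚ (k, j)⁆) }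

/-- The framed Drinfeld–Kohno Lie algebra `ft(r)`: the quotient of the free Lie algebra over `ℚ`
on the generators `t_{ij}`, `1 ≤ i,j ≤ r`, by the Lie ideal generated by the relations. -/
abbrev ft (r : ℕ) :=
  FreeLieAlgebra ℚ (Fin r × Fin r) ⧸
    LieSubmodule.lieSpan ℚ (FreeLieAlgebra ℚ (Fin r × Fin r)) (ftRel r)

/-- The image `t_{ij}` in `ft(r)` of the generator indexed by `(i,j)`. -/
noncomputable def tf {r : ℕ} (i j : Fin r) : ft r :=
  LieSubmodule.Quotient.mk
    (N := LieSubmodule.lieSpan ℚ (FreeLieAlgebra ℚ (Fin r × Fin r)) (ftRel r))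
    (of ℚ (i, j))

/-!
Write `t(u, v) = ∑ u_i v_j t_{ij}` for `u, v ∈ ℚ^r`. Since `t_{ij} = t_{ji}`, the prescribed values
of `τ` say that `τ (t(u, v)) = t(σ u, σ v)` on basis vectors, hence for all `u` and `v`, where `σ`
is the linear map fixing `e_2, …, e_r` and sending `e_1` to `-(e_1 + ⋯ + e_r)`. This `σ` is a
reflection, hence an involution, so `τ ∘ τ` fixes every generator.
-/

section Reflection

open Module

variable {R V M ι : Type*} [CommRing R] [AddCommGroup V] [Module R V] [AddCommGroup M] [Module R M]
  [Fintype ι]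

/-- The reflection `x ↦ x - x_o (b_o + ∑ k, b_k)` of a module with basis `b`: it sends `b_o` to
`-∑ k, b_k` and fixes the other basis vectors. For the standard basis of `ℚ^r` it is the linear
substitution underlying the cyclic map. -/
noncomputable def negSumReflection (b : Basis ι R V) (o : ι) : V ≃ₗ[R] V :=
  reflection (x := b o + ∑ k, b k) (f := b.coord o) <| by
    classical simp [Finsupp.single_apply, one_add_one_eq_two]

theorem negSumReflection_involutive (b : Basis ι R V) (o : ι) :
    Function.Involutive (negSumReflection b o) :=
  involutive_reflection _

theorem negSumReflection_apply_self (b : Basis ι R V) (o : ι) :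
    negSumReflection b o (b o) = -∑ k, b k := by
  simp [negSumReflection, reflection_apply]

theorem negSumReflection_apply_of_ne (b : Basis ι R V) {o i : ι} (hi : i ≠ o) :
    negSumReflection b o (b i) = b i := by
  simp [negSumReflection, reflection_apply, hi]

theorem map_bilin_eq_bilin_negSumReflection {b : Basis ι R V} {o : ι} {B : V →ₗ[R] V →ₗ[R] M}
    {τ : M →ₗ[R] M}
    (h_fix : ∀ i j, i ≠ o → j ≠ o → τ (B (b i) (b j)) = B (b i) (b j))
    (h_left : ∀ j, j ≠ o → τ (B (b o) (b j)) = -∑ k, B (b k) (b j))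
    (h_right : ∀ i, i ≠ o → τ (B (b i) (b o)) = -∑ k, B (b i) (b k))
    (h_both : τ (B (b o) (b o)) = ∑ k, ∑ l, B (b k) (b l)) (u v : V) :
    τ (B u v) = B (negSumReflection b o u) (negSumReflection b o v) := by
  let σ : V →ₗ[R] V := (negSumReflection b o).toLinearMap
  suffices h : B.compr₂ τ = B.compl₁₂ σ σ from LinearMap.congr_fun₂ h u v
  refine LinearMap.ext_basis b b fun i j => ?_
  simp only [σ, LinearMap.compr₂_apply, LinearMap.compl₁₂_apply, LinearEquiv.coe_coe]
  by_cases hi : i = o <;> by_cases hj : j = o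
  · simp [hi, hj, negSumReflection_apply_self, h_both]
  · simp [hi, negSumReflection_apply_self, negSumReflection_apply_of_ne b hj, h_left j hj]
  · simp [hj, negSumReflection_apply_self, negSumReflection_apply_of_ne b hi, h_right i hi]
  · simp [negSumReflection_apply_of_ne b hi, negSumReflection_apply_of_ne b hj, h_fix i j hi hj]

theorem map_map_eq_self_of_cyclic {t : ι → ι → M} {o : ι} {τ : M →ₗ[R] M}
    (h_fix : ∀ i j, i ≠ o → j ≠ o → τ (t i j) = t i j)
    (h_left : ∀ j, j ≠ o → τ (t o j) = -∑ k, t k j)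
    (h_right : ∀ i, i ≠ o → τ (t i o) = -∑ k, t i k)
    (h_both : τ (t o o) = ∑ k, ∑ l, t k l) (i j : ι) :
    τ (τ (t i j)) = t i j := by
  classical
  let b := Pi.basisFun R ι
  let B := Matrix.toLinearMap₂ b b (Matrix.of t)
  have hB : ∀ i j, B (b i) (b j) = t i j := Matrix.toLinearMap₂_apply_basis b b (Matrix.of t)
  have h_map : ∀ u v, τ (B u v) = B (negSumReflection b o u) (negSumReflection b o v) :=
    map_bilin_eq_bilin_negSumReflection (by simpa only [hB]) (by simpa only [hB])
      (by simpa only [hB]) (by simpa only [hB])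
  rw [← hB, h_map, h_map, negSumReflection_involutive, negSumReflection_involutive]

end Reflection

/-- The quotient map by a Lie ideal as a homomorphism of Lie algebras; `LieSubmodule.Quotient.mk'`
is the same map as a homomorphism of Lie modules. -/
def lieIdealQuotientMk {R L : Type*} [CommRing R] [LieRing L] [LieAlgebra R L]
    (I : LieIdeal R L) : L →ₗ⁅R⁆ L ⧸ I where
  toLinearMap := (LieSubmodule.Quotient.mk' I : L →ₗ[R] L ⧸ I)
  map_lie' := LieSubmodule.Quotient.mk_bracket _ _ _

theorem tf_comm {r : ℕ} (i j : Fin r) : tf i j = tf j i :=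
  (Submodule.Quotient.eq _).2 <| LieSubmodule.subset_lieSpan <| Or.inl ⟨i, j, rfl⟩

theorem ft_hom_ext {r : ℕ} {L : Type*} [LieRing L] [LieAlgebra ℚ L] {f g : ft r →ₗ⁅ℚ⁆ L}
    (h : ∀ i j, f (tf i j) = g (tf i j)) : f = g := by
  have h_comp : f.comp (lieIdealQuotientMk _) = g.comp (lieIdealQuotientMk _) :=
    FreeLieAlgebra.hom_ext fun p => h p.1 p.2
  ext x
  obtain ⟨y, rfl⟩ := LieSubmodule.Quotient.surjective_mk' _ x
  exact LieHom.congr_fun h_comp y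

/-- For `r ≥ 1`, if `τ : ft(r) → ft(r)` is the Lie algebra homomorphism with
`τ(t_{ij}) = t_{ij}` for `2 ≤ i,j ≤ r`, `τ(t_{1i}) = τ(t_{i1}) = −∑_{k=1}^r t_{ki}` for
`2 ≤ i ≤ r`, and `τ(t_{11}) = ∑_{k,l=1}^r t_{kl}`, then `τ ∘ τ = id`; in particular `τ` is an
automorphism of order at most two.  (The index `1` is represented by `⟨0, hr⟩ : Fin r`.) -/
theorem cyclic_map_involutive (r : ℕ) (hr : 1 ≤ r) (τ : ft r →ₗ⁅ℚ⁆ ft r)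
    (h1 : ∀ i j : Fin r, i ≠ ⟨0, hr⟩ → j ≠ ⟨0, hr⟩ → τ (tf i j) = tf i j)
    (h2 : ∀ i : Fin r, i ≠ ⟨0, hr⟩ → τ (tf ⟨0, hr⟩ i) = -∑ k : Fin r, tf k i)
    (h3 : ∀ i : Fin r, i ≠ ⟨0, hr⟩ → τ (tf i ⟨0, hr⟩) = -∑ k : Fin r, tf k i)
    (h4 : τ (tf ⟨0, hr⟩ ⟨0, hr⟩) = ∑ k : Fin r, ∑ l : Fin r, tf k l) :
    ∀ x : ft r, τ (τ x) = x := by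
  have h_right : ∀ i : Fin r, i ≠ ⟨0, hr⟩ → τ (tf i ⟨0, hr⟩) = -∑ k : Fin r, tf i k :=
    fun i hi => by rw [h3 i hi, Finset.sum_congr rfl fun k _ => tf_comm k i]
  have h_tf : ∀ i j : Fin r, τ (τ (tf i j)) = tf i j :=
    map_map_eq_self_of_cyclic (t := tf) (τ := τ.toLinearMap) h1 h2 h_right h4
  have h_comp : τ.comp τ = LieHom.id := ft_hom_ext h_tf
  exact LieHom.congr_fun h_comp
end
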